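/- For a ring R the following are equivalent: (1) R is a left IF-ring; (2) every finitely presented left R-module embeds in a flat left R-module; (3) every FP-injective left R-module is flat; (4) every injective left R-module is flat. -/

import Mathlib

/-!
Common definitions: rings are associative with identity, not necessarily commutative.
Left `R`-modules are `Module R M`; right `R`-modules are `Module Rᵐᵒᵖ M`.
-/

universe u

open MulOpposite Function Pointwise

section Defs

variable (R : Type u) [Ring R]

/-- Defining relations of the tensor product `K ⊗_R M` of a right `R`-module `K`
and a left `R`-module `M`, inside the free abelian group on `K × M`. -/
def TensorRels (K M : Type u) [AddCommGroup K] [Module Rᵐᵒᵖ K]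
    [AddCommGroup M] [Module R M] : AddSubgroup (FreeAbelianGroup (K × M)) :=
  AddSubgroup.closure
    ({x | ∃ k₁ k₂ m, x = FreeAbelianGroup.of (k₁ + k₂, m) - FreeAbelianGroup.of (k₁, m) -
        FreeAbelianGroup.of (k₂, m)} ∪
     {x | ∃ k m₁ m₂, x = FreeAbelianGroup.of (k, m₁ + m₂) - FreeAbelianGroup.of (k, m₁) -
        FreeAbelianGroup.of (k, m₂)} ∪
     {x | ∃ (r : R) (k : K) (m : M),
        x = FreeAbelianGroup.of (op r • k, m) - FreeAbelianGroup.of (k, r • m)})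

/-- The tensor product `K ⊗_R M` of a right `R`-module `K` and a left `R`-module `M`
over the (not necessarily commutative) ring `R`, as an abelian group. -/
def NCTensor (K M : Type u) [AddCommGroup K] [Module Rᵐᵒᵖ K]
    [AddCommGroup M] [Module R M] : Type u :=
  FreeAbelianGroup (K × M) ⧸ TensorRels R K M

instance (K M : Type u) [AddCommGroup K] [Module Rᵐᵒᵖ K] [AddCommGroup M] [Module R M] :
    AddCommGroup (NCTensor R K M) :=
  QuotientAddGroup.Quotient.addCommGroup _

/-- The map `μ ⊗ ν : K ⊗_R M → K' ⊗_R M'` induced by a map `μ` of right `R`-modules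
and a map `ν` of left `R`-modules. -/
def tensorCongr {K K' M M' : Type u} [AddCommGroup K] [Module Rᵐᵒᵖ K]
    [AddCommGroup K'] [Module Rᵐᵒᵖ K'] [AddCommGroup M] [Module R M]
    [AddCommGroup M'] [Module R M'] (μ : K →ₗ[Rᵐᵒᵖ] K') (ν : M →ₗ[R] M') :
    NCTensor R K M →+ NCTensor R K' M' :=
  QuotientAddGroup.map (TensorRels R K M) (TensorRels R K' M')
    (FreeAbelianGroup.lift fun p : K × M => FreeAbelianGroup.of (μ p.1, ν p.2))
    (by
      refine (AddSubgroup.closure_le _).2 ?_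
      rintro x ((⟨k₁, k₂, m, rfl⟩ | ⟨k, m₁, m₂, rfl⟩) | ⟨r, k, m, rfl⟩) <;>
        refine AddSubgroup.mem_comap.2 (AddSubgroup.subset_closure ?_)
      · exact Or.inl <| Or.inl ⟨μ k₁, μ k₂, ν m, by simp [map_add]⟩
      · exact Or.inl <| Or.inr ⟨μ k, ν m₁, ν m₂, by simp [map_add]⟩
      · exact Or.inr ⟨r, μ k, ν m, by simp [map_smul]⟩)

/-- A left `R`-module `M` is flat if `μ ⊗ M` is injective for every injective
homomorphism `μ` of right `R`-modules. -/
def ModFlat (M : Type u) [AddCommGroup M] [Module R M] : Prop :=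
  ∀ (K L : Type u) [AddCommGroup K] [Module Rᵐᵒᵖ K] [AddCommGroup L] [Module Rᵐᵒᵖ L]
    (μ : K →ₗ[Rᵐᵒᵖ] L), Injective μ →
      Injective (tensorCongr R μ (LinearMap.id : M →ₗ[R] M))

/-- A right `R`-module `M` is flat if `M ⊗ μ` is injective for every injective
homomorphism `μ` of left `R`-modules. -/
def ModFlatRight (M : Type u) [AddCommGroup M] [Module Rᵐᵒᵖ M] : Prop :=
  ∀ (K L : Type u) [AddCommGroup K] [Module R K] [AddCommGroup L] [Module R L]
    (μ : K →ₗ[R] L), Injective μ →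
      Injective (tensorCongr R (LinearMap.id : M →ₗ[Rᵐᵒᵖ] M) μ)

/-- A left `R`-module `M` is fp-flat if `μ ⊗ M` is injective for every injective
homomorphism `μ` of finitely presented right `R`-modules. -/
def FpFlat (M : Type u) [AddCommGroup M] [Module R M] : Prop :=
  ∀ (K L : Type u) [AddCommGroup K] [Module Rᵐᵒᵖ K] [AddCommGroup L] [Module Rᵐᵒᵖ L],
    Module.FinitePresentation Rᵐᵒᵖ K → Module.FinitePresentation Rᵐᵒᵖ L →
    ∀ (μ : K →ₗ[Rᵐᵒᵖ] L), Injective μ →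
      Injective (tensorCongr R μ (LinearMap.id : M →ₗ[R] M))

/-- A right `R`-module `M` is fp-flat if `M ⊗ μ` is injective for every injective
homomorphism `μ` of finitely presented left `R`-modules. -/
def FpFlatRight (M : Type u) [AddCommGroup M] [Module Rᵐᵒᵖ M] : Prop :=
  ∀ (K L : Type u) [AddCommGroup K] [Module R K] [AddCommGroup L] [Module R L],
    Module.FinitePresentation R K → Module.FinitePresentation R L →
    ∀ (μ : K →ₗ[R] L), Injective μ →
      Injective (tensorCongr R (LinearMap.id : M →ₗ[Rᵐᵒᵖ] M) μ)

/-- `Ext¹_R(F, M) = 0`. -/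
def ExtVanish (F M : Type u) [AddCommGroup F] [Module R F] [AddCommGroup M] [Module R M] :
    Prop :=
  Subsingleton
    (((Ext ℤ (ModuleCat.{u} R) 1).obj (Opposite.op (ModuleCat.of R F))).obj (ModuleCat.of R M))

/-- A left `R`-module `M` is FP-injective (absolutely pure) if `Ext¹_R(F, M) = 0` for
every finitely presented left `R`-module `F`. -/
def FPInjective (M : Type u) [AddCommGroup M] [Module R M] : Prop :=
  ∀ (F : Type u) [AddCommGroup F] [Module R F], Module.FinitePresentation R F → ExtVanish R F M

/-- A left `R`-module `M` is fp-injective if for every injective homomorphism `μ : K → L`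
of finitely presented left `R`-modules, the induced map `Hom(L, M) → Hom(K, M)` is
surjective. -/
def FpInjective (M : Type u) [AddCommGroup M] [Module R M] : Prop :=
  ∀ (K L : Type u) [AddCommGroup K] [Module R K] [AddCommGroup L] [Module R L],
    Module.FinitePresentation R K → Module.FinitePresentation R L →
    ∀ (μ : K →ₗ[R] L), Injective μ → ∀ f : K →ₗ[R] M, ∃ g : L →ₗ[R] M, g ∘ₗ μ = f

/-- A left `R`-module `K` is an FP-cogenerator if for every nonzero homomorphism
`f : M → N` from a finitely generated module `M` to a finitely presented module `N`
there is `g : N → K` with `g ∘ f ≠ 0`. -/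
def IsFPCogenerator (K : Type u) [AddCommGroup K] [Module R K] : Prop :=
  ∀ (M N : Type u) [AddCommGroup M] [Module R M] [AddCommGroup N] [Module R N],
    Module.Finite R M → Module.FinitePresentation R N →
    ∀ f : M →ₗ[R] N, f ≠ 0 → ∃ g : N →ₗ[R] K, g ∘ₗ f ≠ 0

/-- A left `R`-module `K` is a cogenerator if for every nonzero homomorphism `f : M → N`
of left `R`-modules there is `g : N → K` with `g ∘ f ≠ 0`. -/
def IsCogenerator (K : Type u) [AddCommGroup K] [Module R K] : Prop :=
  ∀ (M N : Type u) [AddCommGroup M] [Module R M] [AddCommGroup N] [Module R N],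
    ∀ f : M →ₗ[R] N, f ≠ 0 → ∃ g : N →ₗ[R] K, g ∘ₗ f ≠ 0

/-- The canonical evaluation map `M → M** = Hom(Hom(M, R), R)` for a left `R`-module `M`;
here `M* = Hom_R(M, R)` is a right `R`-module. -/
def dualEval (M : Type u) [AddCommGroup M] [Module R M] :
    M →ₗ[R] ((M →ₗ[R] R) →ₗ[Rᵐᵒᵖ] R) where
  toFun m :=
    { toFun := fun f => f m
      map_add' := fun f g => rfl
      map_smul' := fun r f => rfl }
  map_add' m m' := LinearMap.ext fun f => f.map_add m m'
  map_smul' r m := LinearMap.ext fun f => by simp [f.map_smul]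

/-- The canonical evaluation map `M → M** = Hom(Hom(M, R), R)` for a right `R`-module `M`;
here `M* = Hom_R(M, R)` is a left `R`-module. -/
def dualEvalRight (M : Type u) [AddCommGroup M] [Module Rᵐᵒᵖ M] :
    M →ₗ[Rᵐᵒᵖ] ((M →ₗ[Rᵐᵒᵖ] R) →ₗ[R] R) where
  toFun m :=
    { toFun := fun f => f m
      map_add' := fun f g => rfl
      map_smul' := fun r f => rfl }
  map_add' m m' := LinearMap.ext fun f => f.map_add m m'
  map_smul' r m := LinearMap.ext fun f => by simp [f.map_smul]

/-- The left annihilator of a subset `X ⊆ R`. -/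
def lAnn (X : Set R) : Set R := {a | ∀ x ∈ X, a * x = 0}

/-- The right annihilator of a subset `X ⊆ R`. -/
def rAnn (X : Set R) : Set R := {a | ∀ x ∈ X, x * a = 0}

/-- `R` is left coherent: every finitely generated left ideal is finitely presented. -/
def LeftCoherent : Prop :=
  ∀ I : Submodule R R, I.FG → Module.FinitePresentation R I

/-- `R` is right coherent: every finitely generated right ideal is finitely presented. -/
def RightCoherent : Prop :=
  ∀ I : Submodule Rᵐᵒᵖ R, I.FG → Module.FinitePresentation Rᵐᵒᵖ I

/-- A left `R`-module `M` embeds in a free left `R`-module. -/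
def EmbedsInFree (M : Type u) [AddCommGroup M] [Module R M] : Prop :=
  ∃ (ι : Type u) (f : M →ₗ[R] (ι →₀ R)), Injective f

/-- A right `R`-module `M` embeds in a free right `R`-module. -/
def EmbedsInFreeRight (M : Type u) [AddCommGroup M] [Module Rᵐᵒᵖ M] : Prop :=
  ∃ (ι : Type u) (f : M →ₗ[Rᵐᵒᵖ] (ι →₀ R)), Injective f

/-- `R` is a left IF-ring: every finitely presented left `R`-module embeds in a free module. -/
def LeftIF : Prop :=
  ∀ (M : Type u) [AddCommGroup M] [Module R M],
    Module.FinitePresentation R M → EmbedsInFree R M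

/-- `R` is a right IF-ring: every finitely presented right `R`-module embeds in a free module. -/
def RightIF : Prop :=
  ∀ (M : Type u) [AddCommGroup M] [Module Rᵐᵒᵖ M],
    Module.FinitePresentation Rᵐᵒᵖ M → EmbedsInFreeRight R M

/-- A module is cyclic if it is generated by one element. -/
def CyclicModule (M : Type u) [AddCommGroup M] [Module R M] : Prop :=
  ∃ m : M, Submodule.span R {m} = ⊤

/-- `R` is a left CF-ring: every cyclic left `R`-module embeds in a free module. -/
def LeftCF : Prop :=
  ∀ (M : Type u) [AddCommGroup M] [Module R M], CyclicModule R M → EmbedsInFree R M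

/-- `R` is a left FGF-ring: every finitely generated left `R`-module embeds in a free module. -/
def LeftFGF : Prop :=
  ∀ (M : Type u) [AddCommGroup M] [Module R M], Module.Finite R M → EmbedsInFree R M

/-- `R` is a left Kasch ring: `Hom_R(M, R) ≠ 0` for every nonzero cyclic left `R`-module. -/
def LeftKasch : Prop :=
  ∀ (M : Type u) [AddCommGroup M] [Module R M],
    CyclicModule R M → Nontrivial M → ∃ f : M →ₗ[R] R, f ≠ 0

/-- `R` is a right Kasch ring: `Hom_R(M, R) ≠ 0` for every nonzero cyclic right `R`-module. -/
def RightKasch : Prop :=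
  ∀ (M : Type u) [AddCommGroup M] [Module Rᵐᵒᵖ M],
    CyclicModule Rᵐᵒᵖ M → Nontrivial M → ∃ f : M →ₗ[Rᵐᵒᵖ] R, f ≠ 0

/-- The socle of a module: the sum of all its simple submodules. -/
def socle (M : Type u) [AddCommGroup M] [Module R M] : Submodule R M :=
  sSup {N : Submodule R M | IsSimpleModule R N}

/-- `R` is left semiartinian: every nonzero cyclic left `R`-module has a nonzero socle. -/
def LeftSemiartinian : Prop :=
  ∀ (M : Type u) [AddCommGroup M] [Module R M],
    CyclicModule R M → Nontrivial M → socle R M ≠ ⊥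

/-- A submodule `N ⊆ M` is essential if it meets every nonzero submodule nontrivially. -/
def EssentialSub {M : Type u} [AddCommGroup M] [Module R M] (N : Submodule R M) : Prop :=
  ∀ P : Submodule R M, P ≠ ⊥ → N ⊓ P ≠ ⊥

/-- `R` is semiregular: `R/rad R` is von Neumann regular,
where `rad R` is the Jacobson radical. -/
def Semiregular : Prop :=
  ∀ a : R, ∃ x : R, a - a * x * a ∈ Ideal.jacobson (⊥ : Ideal R)

/-- `R` is semiperfect: `R/rad R` is semisimple and idempotents lift modulo `rad R`. -/
def Semiperfect : Prop :=
  IsSemisimpleModule R (R ⧸ Ideal.jacobson (⊥ : Ideal R)) ∧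
    ∀ a : R, a * a - a ∈ Ideal.jacobson (⊥ : Ideal R) →
      ∃ e : R, e * e = e ∧ e - a ∈ Ideal.jacobson (⊥ : Ideal R)

/-- A module is indecomposable if it is nonzero and is not the direct sum of two
nonzero submodules. -/
def IndecModule (M : Type u) [AddCommGroup M] [Module R M] : Prop :=
  Nontrivial M ∧ ∀ A B : Submodule R M, IsCompl A B → A = ⊥ ∨ B = ⊥

/-- `R` is weakly quasi-Frobenius: left and right coherent and left and right FP-injective. -/
def WQF : Prop :=
  LeftCoherent R ∧ RightCoherent R ∧ FPInjective R R ∧ FPInjective Rᵐᵒᵖ R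

/-- `R` is quasi-Frobenius: left and right noetherian and left and right self-injective. -/
def QF : Prop :=
  IsNoetherianRing R ∧ IsNoetherian Rᵐᵒᵖ R ∧ Module.Injective R R ∧ Module.Injective Rᵐᵒᵖ R

end Defs

/-- A group is locally finite if every finitely generated subgroup is finite. -/
def LocallyFiniteGroup (G : Type*) [Group G] : Prop :=
  ∀ H : Subgroup G, H.FG → Finite H

/-!
Flatness is replaced by a factorization property (the criterion of Govorov and Lazard): `M` is flat
if and only if every map from a finitely presented module to `M` factors through a free module.
If `M` is flat and `G → F → P → 0` is a finite free presentation, then `P* ⊗ M` is the kernel of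
`F* ⊗ M → G* ⊗ M`, hence is `Hom(P, M)`, and a tensor `∑ φᵢ ⊗ mᵢ` gives a factorization
`P → Rⁿ → M`. Conversely, a tensor which vanishes over `M` already vanishes over a finitely
presented module mapping to `M`, hence over a free module, and free modules are flat.

Thus a finitely presented module which embeds in a flat module embeds in a free one. If it embeds in
a free module, it embeds in a finite free one with finitely presented cokernel, so its maps to an
FP-injective module extend to that free module. Finally, every module embeds in an injective one.
-/

theorem exists_comp_eq_of_ker_le_ker {R A B C : Type*} [Ring R] [AddCommGroup A] [Module R A]
    [AddCommGroup B] [Module R B] [AddCommGroup C] [Module R C] {s : A →ₗ[R] B}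
    (hs : Surjective s) {t : A →ₗ[R] C} (h : LinearMap.ker s ≤ LinearMap.ker t) :
    ∃ q : B →ₗ[R] C, q ∘ₗ s = t :=
  ⟨(LinearMap.ker s).liftQ t h ∘ₗ (s.quotKerEquivOfSurjective hs).symm.toLinearMap, by
    ext a; simp⟩

-- The hypotheses make `L` the pushout of `α` and `d`.
theorem exists_comp_eq_of_exact_of_comp_eq {R M N L F X₁ X₀ : Type*} [Ring R]
    [AddCommGroup M] [Module R M] [AddCommGroup N] [Module R N] [AddCommGroup L] [Module R L]
    [AddCommGroup F] [Module R F] [AddCommGroup X₁] [Module R X₁] [AddCommGroup X₀] [Module R X₀]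
    {j : N →ₗ[R] L} {π : L →ₗ[R] F} {d : X₁ →ₗ[R] X₀}
    {ε : X₀ →ₗ[R] F} {α : X₁ →ₗ[R] N} {β : X₀ →ₗ[R] L} (hj : Injective j) (hjπ : Exact j π)
    (hdε : Exact d ε) (hε : Surjective ε) (hβ : π ∘ₗ β = ε) (hα : j ∘ₗ α = β ∘ₗ d)
    {f : N →ₗ[R] M} {g : X₀ →ₗ[R] M} (hfg : f ∘ₗ α = g ∘ₗ d) : ∃ q : L →ₗ[R] M, q ∘ₗ j = f := by
  have coprod_surjective : Surjective (j.coprod β) := fun y => by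
    obtain ⟨x, hx⟩ := hε (π y)
    obtain ⟨n, hn⟩ := (hjπ (y - β x)).1 (by
      rw [map_sub, ← hx, ← hβ, LinearMap.comp_apply, sub_self])
    exact ⟨(n, x), by rw [LinearMap.coprod_apply, hn, sub_add_cancel]⟩
  have ker_coprod_le : LinearMap.ker (j.coprod β) ≤ LinearMap.ker (f.coprod g) := by
    rintro ⟨n, x⟩ hnx
    rw [LinearMap.mem_ker, LinearMap.coprod_apply] at hnx ⊢
    have ε_x : ε x = 0 := by
      simpa [hjπ.apply_apply_eq_zero, ← hβ] using congrArg π hnx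
    obtain ⟨z, rfl⟩ := (hdε x).1 ε_x
    have n_eq : n = -α z := hj <| by
      rw [map_neg, ← LinearMap.comp_apply, hα]
      exact eq_neg_of_add_eq_zero_left hnx
    rw [n_eq, map_neg, ← LinearMap.comp_apply, hfg, LinearMap.comp_apply, neg_add_cancel]
  obtain ⟨q, hq⟩ := exists_comp_eq_of_ker_le_ker coprod_surjective ker_coprod_le
  refine ⟨q, ?_⟩
  rw [← LinearMap.coprod_inl j β, ← LinearMap.comp_assoc, hq, LinearMap.coprod_inl]

theorem exists_dual_basis (R F : Type*) [Ring R] [AddCommGroup F] [Module R F] [Module.Finite R F]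
    [Module.Projective R F] :
    ∃ (n : ℕ) (φ : Fin n → F →ₗ[R] R) (e : Fin n → F), ∀ x, ∑ i, φ i x • e i = x := by
  obtain ⟨n, p, s, -, -, hps⟩ := Module.Finite.exists_comp_eq_id_of_projective R F
  refine ⟨n, fun i => LinearMap.proj i ∘ₗ s, fun i => p (Pi.single i 1), fun x => ?_⟩
  calc ∑ i, s x i • p (Pi.single i 1)
    _ = p (∑ i, s x i • Pi.single i 1) := by simp only [map_sum, map_smul]
    _ = p (s x) := by rw [← pi_eq_sum_univ' (s x)]
    _ = x := LinearMap.congr_fun hps x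

theorem exists_finset_forall_mapDomain_comapDomain {R α N : Type*} [Ring R] [AddCommGroup N]
    [Module R N] {U : Submodule R (α →₀ N)} (hU : U.FG) :
    ∃ T : Finset α, ∀ x ∈ U,
      Finsupp.mapDomain ((↑) : T → α) (Finsupp.comapDomain (↑) x Subtype.val_injective.injOn) =
        x := by
  classical
  obtain ⟨s, rfl⟩ := hU
  refine ⟨s.biUnion Finsupp.support, fun x hx =>
    Finsupp.mapDomain_comapDomain _ Subtype.val_injective x fun a ha => ?_⟩
  simpa using Finsupp.span_le_supported_biUnion_support (R := R) _ hx ha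

namespace NCTensor

variable (R : Type u) [Ring R] {K L M N : Type u} [AddCommGroup K] [Module Rᵐᵒᵖ K]
  [AddCommGroup L] [Module Rᵐᵒᵖ L] [AddCommGroup M] [Module R M] [AddCommGroup N] [Module R N]

/-- The quotient map from the free abelian group on `K × M` to `K ⊗_R M`. It is a homomorphism of
groups with codomain `NCTensor R K M`, which hides the underlying quotient. -/
def mk : FreeAbelianGroup (K × M) →+ NCTensor R K M :=
  QuotientAddGroup.mk' (TensorRels R K M)

theorem mk_surjective : Surjective (mk R : FreeAbelianGroup (K × M) →+ NCTensor R K M) :=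
  QuotientAddGroup.mk'_surjective _

variable {R} in
theorem mk_eq_zero {x : FreeAbelianGroup (K × M)} (hx : x ∈ TensorRels R K M) : mk R x = 0 :=
  (QuotientAddGroup.eq_zero_iff x).2 hx

/-- The pure tensor `k ⊗ m`, as a biadditive map. -/
def tmul : K →+ M →+ NCTensor R K M :=
  AddMonoidHom.mk' (fun k => AddMonoidHom.mk' (fun m => mk R (FreeAbelianGroup.of (k, m)))
      (fun m₁ m₂ => by
        rw [← sub_eq_zero, ← sub_sub, ← map_sub, ← map_sub]
        exact mk_eq_zero (AddSubgroup.subset_closure (.inl (.inr ⟨k, m₁, m₂, rfl⟩)))))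
    (fun k₁ k₂ => AddMonoidHom.ext fun m => by
      simp only [AddMonoidHom.mk'_apply, AddMonoidHom.add_apply]
      rw [← sub_eq_zero, ← sub_sub, ← map_sub, ← map_sub]
      exact mk_eq_zero (AddSubgroup.subset_closure (.inl (.inl ⟨k₁, k₂, m, rfl⟩))))

theorem op_smul_tmul (r : R) (k : K) (m : M) : tmul R (op r • k) m = tmul R k (r • m) :=
  sub_eq_zero.1 ((map_sub (mk R) _ _).symm.trans
    (mk_eq_zero (AddSubgroup.subset_closure (.inr ⟨r, k, m, rfl⟩))))

variable {R}

@[elab_as_elim]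
theorem induction_on {p : NCTensor R K M → Prop} (t : NCTensor R K M)
    (tmul : ∀ k m, p (tmul R k m)) (add : ∀ s t, p s → p t → p (s + t)) : p t := by
  obtain ⟨z, rfl⟩ := mk_surjective R t
  induction z using FreeAbelianGroup.induction_on with
  | zero => simpa only [map_zero] using tmul 0 0
  | of x => exact tmul x.1 x.2
  | neg x =>
    have neg_tmul := tmul (-x.1) x.2
    rw [map_neg, AddMonoidHom.neg_apply] at neg_tmul
    rwa [map_neg]
  | add x y hx hy => simpa only [map_add] using add _ _ hx hy

section lift

variable {A : Type*} [AddCommGroup A] (f : K →+ M →+ A)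
  (hf : ∀ (r : R) k m, f (op r • k) m = f k (r • m))

/-- The homomorphism out of `K ⊗_R M` induced by a biadditive `R`-balanced map. -/
def lift : NCTensor R K M →+ A :=
  QuotientAddGroup.lift (TensorRels R K M) (FreeAbelianGroup.lift fun x : K × M => f x.1 x.2)
    ((AddSubgroup.closure_le (AddMonoidHom.ker _)).2 (by
      rintro x ((⟨k₁, k₂, m, rfl⟩ | ⟨k, m₁, m₂, rfl⟩) | ⟨r, k, m, rfl⟩) <;>
        simp [AddMonoidHom.mem_ker, hf]))

@[simp]
theorem lift_tmul (k : K) (m : M) : lift f hf (tmul R k m) = f k m :=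
  FreeAbelianGroup.lift_apply_of (fun x : K × M => f x.1 x.2) (k, m)

end lift

section tensorCongr

@[simp]
theorem tensorCongr_tmul (μ : K →ₗ[Rᵐᵒᵖ] L) (ν : M →ₗ[R] N) (k : K) (m : M) :
    tensorCongr R μ ν (tmul R k m) = tmul R (μ k) (ν m) :=
  congrArg (QuotientAddGroup.mk' (TensorRels R L N)) (FreeAbelianGroup.lift_apply_of _ (k, m))

theorem tensorCongr_tensorCongr {L' N' : Type u} [AddCommGroup L'] [Module Rᵐᵒᵖ L']
    [AddCommGroup N'] [Module R N'] (μ' : L →ₗ[Rᵐᵒᵖ] L') (ν' : N →ₗ[R] N') (μ : K →ₗ[Rᵐᵒᵖ] L)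
    (ν : M →ₗ[R] N) (t : NCTensor R K M) :
    tensorCongr R μ' ν' (tensorCongr R μ ν t) = tensorCongr R (μ' ∘ₗ μ) (ν' ∘ₗ ν) t := by
  induction t using induction_on with
  | tmul k m => simp
  | add s t hs ht => simp only [map_add, hs, ht]

theorem tensorCongr_comm (μ : K →ₗ[Rᵐᵒᵖ] L) (ν : M →ₗ[R] N) (t : NCTensor R K M) :
    tensorCongr R μ .id (tensorCongr R .id ν t) = tensorCongr R .id ν (tensorCongr R μ .id t) := by
  simp only [tensorCongr_tensorCongr, LinearMap.comp_id, LinearMap.id_comp]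

variable {μ : K →ₗ[Rᵐᵒᵖ] L} {ν : M →ₗ[R] N}

theorem tensorCongr_surjective (hμ : Surjective μ) (hν : Surjective ν) :
    Surjective (tensorCongr R μ ν) := by
  intro t
  induction t using induction_on with
  | tmul l n =>
    obtain ⟨k, rfl⟩ := hμ l
    obtain ⟨m, rfl⟩ := hν n
    exact ⟨tmul R k m, tensorCongr_tmul μ ν k m⟩
  | add s t hs ht =>
    obtain ⟨s, rfl⟩ := hs
    obtain ⟨t, rfl⟩ := ht
    exact ⟨s + t, map_add _ s t⟩

/-- The subgroup of `K ⊗_R M` generated by the pure tensors with a factor which `μ` or `ν` kills. -/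
def pureKer (μ : K →ₗ[Rᵐᵒᵖ] L) (ν : M →ₗ[R] N) : AddSubgroup (NCTensor R K M) :=
  AddSubgroup.closure {t | ∃ k m, (μ k = 0 ∨ ν m = 0) ∧ tmul R k m = t}

theorem tmul_sub_tmul_mem_pureKer {k k' : K} {m m' : M} (hk : μ k = μ k') (hm : ν m = ν m') :
    tmul R k m - tmul R k' m' ∈ pureKer μ ν := by
  have hk_mem : tmul R (k - k') m ∈ pureKer μ ν :=
    AddSubgroup.subset_closure ⟨_, _, .inl (by rw [map_sub, hk, sub_self]), rfl⟩
  have hm_mem : tmul R k' (m - m') ∈ pureKer μ ν :=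
    AddSubgroup.subset_closure ⟨_, _, .inr (by rw [map_sub, hm, sub_self]), rfl⟩
  simpa using add_mem hk_mem hm_mem

theorem pureKer_le_ker : pureKer μ ν ≤ (tensorCongr R μ ν).ker :=
  (AddSubgroup.closure_le _).2 <| by
    rintro _ ⟨k, m, h | h, rfl⟩ <;> simp [AddMonoidHom.mem_ker, h]

-- Modulo `pureKer μ ν`, the tensor `k ⊗ m` depends only on `μ k` and `ν m`; this gives a left
-- inverse `L ⊗ N → (K ⊗ M) / pureKer μ ν` of the map induced by `μ ⊗ ν`.
theorem ker_tensorCongr (hμ : Surjective μ) (hν : Surjective ν) :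
    (tensorCongr R μ ν).ker = pureKer μ ν := by
  let q := QuotientAddGroup.mk' (pureKer μ ν)
  have q_tmul_congr {k k' m m'} (hk : μ k = μ k') (hm : ν m = ν m') :
      q (tmul R k m) = q (tmul R k' m') :=
    QuotientAddGroup.eq_iff_sub_mem.2 (tmul_sub_tmul_mem_pureKer hk hm)
  let B : L →+ N →+ NCTensor R K M ⧸ pureKer μ ν :=
    AddMonoidHom.mk' (fun l => AddMonoidHom.mk'
        (fun n => q (tmul R (surjInv hμ l) (surjInv hν n)))
        (fun n n' => by
          rw [← map_add, ← map_add]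
          exact q_tmul_congr rfl (by simp only [map_add, surjInv_eq])))
      (fun l l' => AddMonoidHom.ext fun n => by
        simp only [AddMonoidHom.mk'_apply, AddMonoidHom.add_apply]
        rw [← map_add, ← AddMonoidHom.add_apply, ← map_add]
        exact q_tmul_congr (by simp only [map_add, surjInv_eq]) rfl)
  have B_balanced (r : R) (l n) : B (op r • l) n = B l (r • n) :=
    calc q (tmul R (surjInv hμ (op r • l)) (surjInv hν n))
      _ = q (tmul R (op r • surjInv hμ l) (surjInv hν n)) :=
        q_tmul_congr (by simp only [map_smul, surjInv_eq]) rfl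
      _ = q (tmul R (surjInv hμ l) (r • surjInv hν n)) := by rw [op_smul_tmul]
      _ = q (tmul R (surjInv hμ l) (surjInv hν (r • n))) :=
        q_tmul_congr rfl (by simp only [map_smul, surjInv_eq])
  have lift_tensorCongr (t) : lift B B_balanced (tensorCongr R μ ν t) = q t := by
    induction t using induction_on with
    | tmul k m =>
      rw [tensorCongr_tmul, lift_tmul]
      exact q_tmul_congr (surjInv_eq hμ _) (surjInv_eq hν _)
    | add s t hs ht => simp only [map_add, hs, ht]
  refine le_antisymm (fun t ht => (QuotientAddGroup.eq_zero_iff t).1 ?_) pureKer_le_ker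
  exact (lift_tensorCongr t).symm.trans (by rw [AddMonoidHom.mem_ker.1 ht, map_zero])

theorem tensorCongr_eq_zero_of_le_ker {t : NCTensor R K M} {U : Submodule R M}
    (ht : tensorCongr R .id U.mkQ t = 0) (hU : U ≤ LinearMap.ker ν) : tensorCongr R .id ν t = 0 :=
  calc tensorCongr R .id ν t
    _ = tensorCongr R .id (U.liftQ ν hU) (tensorCongr R .id U.mkQ t) := by
      rw [tensorCongr_tensorCongr, U.liftQ_mkQ, LinearMap.id_comp]
    _ = 0 := by rw [ht, map_zero]

theorem exists_fg_le_ker_tensorCongr_mkQ_eq_zero (hν : Surjective ν) {t : NCTensor R K M}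
    (ht : tensorCongr R .id ν t = 0) :
    ∃ U : Submodule R M, U.FG ∧ U ≤ LinearMap.ker ν ∧ tensorCongr R .id U.mkQ t = 0 := by
  have t_mem_pureKer : t ∈ pureKer .id ν := (ker_tensorCongr surjective_id hν).le ht
  clear ht
  induction t_mem_pureKer using AddSubgroup.closure_induction with
  | mem t ht =>
    obtain ⟨k, m, rfl | h, rfl⟩ := ht
    · exact ⟨⊥, Submodule.fg_bot, bot_le, by simp⟩
    · refine ⟨Submodule.span R {m}, Submodule.fg_span_singleton m, by simpa using h, ?_⟩
      have mkQ_m : (Submodule.span R {m}).mkQ m = 0 := by simp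
      rw [tensorCongr_tmul, mkQ_m, map_zero]
  | zero => exact ⟨⊥, Submodule.fg_bot, bot_le, map_zero _⟩
  | add s t _ _ ihs iht =>
    obtain ⟨U, U_fg, hU, hs⟩ := ihs
    obtain ⟨V, V_fg, hV, ht⟩ := iht
    refine ⟨U ⊔ V, U_fg.sup V_fg, sup_le hU hV, ?_⟩
    rw [map_add, tensorCongr_eq_zero_of_le_ker hs (by simp),
      tensorCongr_eq_zero_of_le_ker ht (by simp), add_zero]
  | neg t _ ih =>
    obtain ⟨U, U_fg, hU, ht⟩ := ih
    exact ⟨U, U_fg, hU, by rw [map_neg, ht, neg_zero]⟩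

end tensorCongr

section Finsupp

variable (ι : Type u)

/-- The map `K ⊗_R R^(ι) → K^(ι)` sending `k ⊗ f` to the family of the `k f(i)`. -/
noncomputable def finsuppRight : NCTensor R K (ι →₀ R) →+ (ι →₀ K) :=
  lift (AddMonoidHom.mk' (fun k => Finsupp.mapRange.addMonoidHom
      (((smulAddHom Rᵐᵒᵖ K).flip k).comp opAddEquiv.toAddMonoidHom))
    (fun k k' => by ext; simp))
    (fun r k f => by ext; simp [mul_smul])

@[simp]
theorem finsuppRight_tmul_apply (k : K) (f : ι →₀ R) (i : ι) :
    finsuppRight ι (tmul R k f) i = op (f i) • k := by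
  simp [finsuppRight]

theorem finsuppRight_tensorCongr (μ : K →ₗ[Rᵐᵒᵖ] L) (t : NCTensor R K (ι →₀ R)) :
    finsuppRight ι (tensorCongr R μ .id t) = (finsuppRight ι t).mapRange μ (map_zero μ) := by
  induction t using induction_on with
  | tmul k f => ext; simp
  | add s t hs ht => simp only [map_add, hs, ht, Finsupp.mapRange_add (map_add μ)]

theorem finsuppRight_injective :
    Injective (finsuppRight ι : NCTensor R K (ι →₀ R) →+ (ι →₀ K)) := by
  let inv : (ι →₀ K) →+ NCTensor R K (ι →₀ R) :=
    Finsupp.liftAddHom fun i => (tmul R).flip (Finsupp.single i 1)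
  have inv_finsuppRight_single (k : K) (i : ι) (r : R) :
      inv (finsuppRight ι (tmul R k (Finsupp.single i r))) = tmul R k (Finsupp.single i r) := by
    have : finsuppRight ι (tmul R k (Finsupp.single i r)) = Finsupp.single i (op r • k) := by
      classical
      ext j
      simp only [finsuppRight_tmul_apply, Finsupp.single_apply]
      split_ifs <;> simp
    rw [this]
    simp [inv, op_smul_tmul]
  refine LeftInverse.injective (g := inv) fun t => ?_
  induction t using induction_on with
  | tmul k f =>
    induction f using Finsupp.induction_linear with
    | zero => simp only [map_zero]
    | add f g hf hg => simp only [map_add, hf, hg]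
    | single i r => exact inv_finsuppRight_single k i r
  | add s t hs ht => simp only [map_add, hs, ht]

end Finsupp

section Dual

variable {F G : Type u} [AddCommGroup F] [Module R F] [AddCommGroup G] [Module R G]

/-- The map `F* ⊗_R M → Hom(F, M)` sending `φ ⊗ m` to `x ↦ φ(x) m`. -/
def toHom : NCTensor R (F →ₗ[R] R) M →+ (F →ₗ[R] M) :=
  lift (AddMonoidHom.mk' (fun φ => AddMonoidHom.mk' (fun m => φ.smulRight m)
      (fun m m' => by ext; simp))
    (fun φ φ' => by ext; simp [add_smul]))
    (fun r φ m => by ext; simp [mul_smul])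

@[simp]
theorem toHom_tmul (φ : F →ₗ[R] R) (m : M) : toHom (tmul R φ m) = φ.smulRight m :=
  lift_tmul ..

theorem toHom_tensorCongr_lcomp (A : G →ₗ[R] F) (t : NCTensor R (F →ₗ[R] R) M) :
    toHom (tensorCongr R (LinearMap.lcomp Rᵐᵒᵖ R A) .id t) = toHom t ∘ₗ A := by
  induction t using induction_on with
  | tmul φ m => ext; simp
  | add s t hs ht => simp only [map_add, hs, ht, LinearMap.add_comp]

theorem toHom_bijective [Module.Finite R F] [Module.Projective R F] :
    Bijective (toHom : NCTensor R (F →ₗ[R] R) M →+ (F →ₗ[R] M)) := by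
  obtain ⟨n, φ, e, sum_smul⟩ := exists_dual_basis R F
  refine ⟨LeftInverse.injective (g := fun h => ∑ i, tmul R (φ i) (h (e i))) fun t => ?_,
    fun h => ⟨∑ i, tmul R (φ i) (h (e i)), ?_⟩⟩
  · induction t using induction_on with
    | tmul ψ m =>
      have sum_op_smul : ∑ i, op (ψ (e i)) • φ i = ψ := by
        ext x
        conv_rhs => rw [← sum_smul x]
        simp
      simp only [toHom_tmul, LinearMap.smulRight_apply, ← op_smul_tmul]
      rw [← AddMonoidHom.finsetSum_apply, ← map_sum, sum_op_smul]
    | add s t hs ht =>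
      simp only [map_add, LinearMap.add_apply, Finset.sum_add_distrib, hs, ht]
  · ext x
    conv_rhs => rw [← sum_smul x]
    simp

end Dual

end NCTensor

theorem modFlat_finsupp (R : Type u) [Ring R] (ι : Type u) : ModFlat R (ι →₀ R) := by
  intro K L _ _ _ _ μ hμ s t hst
  apply NCTensor.finsuppRight_injective ι
  apply Finsupp.mapRange_injective μ (map_zero μ) hμ
  simp only [← NCTensor.finsuppRight_tensorCongr, hst]

section FactorsThroughFree

variable {R : Type u} [Ring R] {P Q M : Type*} [AddCommGroup P] [Module R P] [AddCommGroup Q]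
  [Module R Q] [AddCommGroup M] [Module R M]

/-- A linear map factors through a free module. The rank of the free module is restricted to the
universe of `R`, as in `EmbedsInFree`. -/
def FactorsThroughFree (f : P →ₗ[R] M) : Prop :=
  ∃ (ι : Type u) (g : P →ₗ[R] (ι →₀ R)) (h : (ι →₀ R) →ₗ[R] M), h ∘ₗ g = f

namespace FactorsThroughFree

theorem smulRight (φ : P →ₗ[R] R) (m : M) : FactorsThroughFree (φ.smulRight m) :=
  ⟨PUnit, Finsupp.lsingle PUnit.unit ∘ₗ φ, Finsupp.linearCombination R fun _ => m, by ext; simp⟩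

theorem zero : FactorsThroughFree (0 : P →ₗ[R] M) :=
  ⟨PEmpty, 0, 0, LinearMap.comp_zero 0⟩

theorem comp {f : P →ₗ[R] M} (hf : FactorsThroughFree f) (e : Q →ₗ[R] P) :
    FactorsThroughFree (f ∘ₗ e) := by
  obtain ⟨ι, g, h, rfl⟩ := hf
  exact ⟨ι, g ∘ₗ e, h, rfl⟩

theorem neg {f : P →ₗ[R] M} (hf : FactorsThroughFree f) : FactorsThroughFree (-f) := by
  obtain ⟨ι, g, h, rfl⟩ := hf
  exact ⟨ι, -g, h, LinearMap.comp_neg g h⟩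

theorem add {f₁ f₂ : P →ₗ[R] M} (hf₁ : FactorsThroughFree f₁) (hf₂ : FactorsThroughFree f₂) :
    FactorsThroughFree (f₁ + f₂) := by
  obtain ⟨ι₁, g₁, h₁, rfl⟩ := hf₁
  obtain ⟨ι₂, g₂, h₂, rfl⟩ := hf₂
  let e := Finsupp.sumFinsuppLEquivProdFinsupp R (M := R) (α := ι₁) (β := ι₂)
  exact ⟨ι₁ ⊕ ι₂, e.symm.toLinearMap ∘ₗ g₁.prod g₂, h₁.coprod h₂ ∘ₗ e.toLinearMap, by ext; simp⟩

theorem embedsInFree {P : Type u} [AddCommGroup P] [Module R P] {f : P →ₗ[R] M}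
    (hf : FactorsThroughFree f) (hinj : Injective f) : EmbedsInFree R P := by
  obtain ⟨ι, g, h, rfl⟩ := hf
  exact ⟨ι, g, Injective.of_comp hinj⟩

end FactorsThroughFree

end FactorsThroughFree

section Flat

variable {R : Type u} [Ring R] {M P : Type u} [AddCommGroup M] [Module R M] [AddCommGroup P]
  [Module R P]

open NCTensor

theorem ModFlat.ker_tensorCongr {K L : Type u} [AddCommGroup K] [Module Rᵐᵒᵖ K] [AddCommGroup L]
    [Module Rᵐᵒᵖ L] (hM : ModFlat R M) (μ : K →ₗ[Rᵐᵒᵖ] L) :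
    (tensorCongr R μ (.id : M →ₗ[R] M)).ker = pureKer μ .id := by
  refine le_antisymm (fun t ht => ?_) pureKer_le_ker
  have t_mem_ker : tensorCongr R μ.rangeRestrict .id t = 0 :=
    hM _ _ (LinearMap.range μ).subtype (LinearMap.range μ).injective_subtype <| by
      rw [tensorCongr_tensorCongr, map_zero]
      exact ht
  have t_mem_pureKer :=
    (NCTensor.ker_tensorCongr μ.surjective_rangeRestrict surjective_id).le t_mem_ker
  simpa only [pureKer, ← LinearMap.mem_ker, LinearMap.ker_rangeRestrict] using t_mem_pureKer

variable {F G : Type u} [AddCommGroup F] [Module R F] [AddCommGroup G] [Module R G]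
  {A : G →ₗ[R] F} {p : F →ₗ[R] P}

theorem exists_factorsThroughFree_comp_eq_toHom (hA : Exact A p) (hp : Surjective p)
    {s : NCTensor R (F →ₗ[R] R) M}
    (hs : s ∈ pureKer (LinearMap.lcomp Rᵐᵒᵖ R A) (.id : M →ₗ[R] M)) :
    ∃ f : P →ₗ[R] M, FactorsThroughFree f ∧ f ∘ₗ p = toHom s := by
  induction hs using AddSubgroup.closure_induction with
  | mem t ht =>
    obtain ⟨φ, m, h | rfl, rfl⟩ := ht
    · have φ_comp_A : φ ∘ₗ A = 0 := h
      obtain ⟨ψ, rfl⟩ := exists_comp_eq_of_ker_le_ker hp (t := φ) <| by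
        rw [hA.linearMap_ker_eq]
        exact LinearMap.range_le_ker_iff.2 φ_comp_A
      exact ⟨ψ.smulRight m, .smulRight ψ m, by ext; simp⟩
    · exact ⟨0, .zero, by simp⟩
  | zero => exact ⟨0, .zero, by simp⟩
  | add _ _ _ _ ihs iht =>
    obtain ⟨f₁, hf₁, hf₁p⟩ := ihs
    obtain ⟨f₂, hf₂, hf₂p⟩ := iht
    exact ⟨f₁ + f₂, hf₁.add hf₂, by rw [LinearMap.add_comp, hf₁p, hf₂p, map_add]⟩
  | neg _ _ ih =>
    obtain ⟨f, hf, hfp⟩ := ih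
    exact ⟨-f, hf.neg, by rw [LinearMap.neg_comp, hfp, map_neg]⟩

theorem ModFlat.factorsThroughFree_of_exact [Module.Finite R F] [Module.Projective R F]
    [Module.Finite R G] [Module.Projective R G] (hM : ModFlat R M) (hA : Exact A p)
    (hp : Surjective p) (f : P →ₗ[R] M) : FactorsThroughFree f := by
  obtain ⟨s, hs⟩ := toHom_bijective.2 (f ∘ₗ p)
  have s_mem_ker : tensorCongr R (LinearMap.lcomp Rᵐᵒᵖ R A) .id s = 0 := toHom_bijective.1 <| by
    rw [toHom_tensorCongr_lcomp, hs, LinearMap.comp_assoc, hA.linearMap_comp_eq_zero,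
      LinearMap.comp_zero, map_zero]
  have s_mem_pureKer := (hM.ker_tensorCongr (LinearMap.lcomp Rᵐᵒᵖ R A)).le s_mem_ker
  obtain ⟨f', hf', hf'p⟩ := exists_factorsThroughFree_comp_eq_toHom hA hp s_mem_pureKer
  rwa [← (LinearMap.cancel_right hp).1 (hf'p.trans hs)]

theorem ModFlat.factorsThroughFree (hM : ModFlat R M) [Module.FinitePresentation R P]
    (f : P →ₗ[R] M) : FactorsThroughFree f := by
  obtain ⟨n, m, p, A, hp, hA⟩ := Module.FinitePresentation.exists_fin' R P
  exact hM.factorsThroughFree_of_exact hA hp f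

theorem factorsThroughFree_of_quotient_finsupp
    (hM : ∀ (P : Type u) [AddCommGroup P] [Module R P], Module.FinitePresentation R P →
      ∀ f : P →ₗ[R] M, FactorsThroughFree f)
    {ι : Type u} {U : Submodule R (ι →₀ R)} (hU : U.FG) (f : ((ι →₀ R) ⧸ U) →ₗ[R] M) :
    FactorsThroughFree f := by
  obtain ⟨T, hT⟩ := exists_finset_forall_mapDomain_comapDomain hU
  let i : (T →₀ R) →ₗ[R] (ι →₀ R) := Finsupp.lmapDomain R R (↑)
  let r : (ι →₀ R) →ₗ[R] (T →₀ R) := Finsupp.lcomapDomain (↑) Subtype.val_injective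
  have i_r {x : ι →₀ R} (hx : x ∈ U) : i (r x) = x := hT x hx
  have finitePresentation_quotient : Module.FinitePresentation R ((T →₀ R) ⧸ U.map r) :=
    Module.finitePresentation_of_surjective _ (U.map r).mkQ_surjective
      (by rw [Submodule.ker_mkQ]; exact hU.map r)
  let i' : ((T →₀ R) ⧸ U.map r) →ₗ[R] (ι →₀ R) ⧸ U := (U.map r).mapQ U i <| by
    rintro _ ⟨x, hx, rfl⟩
    rwa [Submodule.mem_comap, i_r hx]
  let r' : ((ι →₀ R) ⧸ U) →ₗ[R] (T →₀ R) ⧸ U.map r := U.mapQ _ r (U.le_comap_map r)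
  let q : ((ι →₀ R) ⧸ U) →ₗ[R] (ι →₀ R) := U.liftQ (.id - i ∘ₗ r) fun x hx => by
    simp [i_r hx]
  have eq_add : f = (f ∘ₗ i') ∘ₗ r' + (f ∘ₗ U.mkQ) ∘ₗ q := by
    ext x
    simp [i', r', q]
  rw [eq_add]
  exact ((hM _ finitePresentation_quotient _).comp r').add ⟨ι, q, f ∘ₗ U.mkQ, rfl⟩

theorem modFlat_of_forall_factorsThroughFree
    (hM : ∀ (P : Type u) [AddCommGroup P] [Module R P], Module.FinitePresentation R P →
      ∀ f : P →ₗ[R] M, FactorsThroughFree f) : ModFlat R M := by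
  intro K L _ _ _ _ μ hμ
  let π : (M →₀ R) →ₗ[R] M := Finsupp.linearCombination R _root_.id
  have hπ : Surjective π := Finsupp.linearCombination_id_surjective R M
  refine (injective_iff_map_eq_zero _).2 fun t ht => ?_
  obtain ⟨s, rfl⟩ := tensorCongr_surjective (μ := (.id : K →ₗ[Rᵐᵒᵖ] K)) surjective_id hπ t
  rw [tensorCongr_comm] at ht
  obtain ⟨U, U_fg, hU, hsU⟩ := exists_fg_le_ker_tensorCongr_mkQ_eq_zero hπ ht
  obtain ⟨ι, g, h, hgh⟩ := factorsThroughFree_of_quotient_finsupp hM U_fg (U.liftQ π hU)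
  have eq_zero_over_free : tensorCongr R .id (g ∘ₗ U.mkQ) s = 0 := by
    refine (injective_iff_map_eq_zero _).1 (modFlat_finsupp R ι K L μ hμ) _ ?_
    rw [tensorCongr_comm]
    refine tensorCongr_eq_zero_of_le_ker hsU fun x hx => ?_
    simp [(Submodule.Quotient.mk_eq_zero U).2 hx]
  have π_eq : π = h ∘ₗ g ∘ₗ U.mkQ := by rw [← LinearMap.comp_assoc, hgh, U.liftQ_mkQ]
  rw [π_eq, ← LinearMap.id_comp (.id : K →ₗ[Rᵐᵒᵖ] K), ← tensorCongr_tensorCongr, eq_zero_over_free,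
    map_zero]

end Flat

section Ext

variable {R : Type u} [Ring R] {M : Type u} [AddCommGroup M] [Module R M]

open CategoryTheory in
theorem extVanish_iff {F : Type u} [AddCommGroup F] [Module R F]
    (Q : ProjectiveResolution (ModuleCat.of R F)) :
    ExtVanish R F M ↔ ∀ f : Q.complex.X 1 ⟶ ModuleCat.of R M, Q.complex.d 2 1 ≫ f = 0 →
      ∃ g : Q.complex.X 0 ⟶ ModuleCat.of R M, Q.complex.d 1 0 ≫ g = f := by
  rw [ExtVanish, ← ModuleCat.isZero_iff_subsingleton, (Q.isoExt 1 (ModuleCat.of R M)).isZero_iff,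
    ← HomologicalComplex.exactAt_iff_isZero_homology,
    HomologicalComplex.exactAt_iff' _ 0 1 2 (by simp) (by simp), ShortComplex.moduleCat_exact_iff]
  rfl

open CategoryTheory in
theorem fpInjective_of_injective (hM : Module.Injective R M) : FPInjective R M := by
  intro F _ _ _
  have : Injective (ModuleCat.of R M) := (Module.injective_iff_injective_object R M).1 hM
  let Q := ProjectiveResolution.of (ModuleCat.of R F)
  exact (extVanish_iff Q).2 fun f hf =>
    ⟨(Q.exact_succ 0).descToInjective f hf, (Q.exact_succ 0).comp_descToInjective f hf⟩

open CategoryTheory in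
theorem ExtVanish.exists_comp_eq {N L F : Type u} [AddCommGroup N] [Module R N] [AddCommGroup L]
    [Module R L] [AddCommGroup F] [Module R F] (h : ExtVanish R F M) {j : N →ₗ[R] L}
    {π : L →ₗ[R] F} (hj : Function.Injective j) (hjπ : Exact j π) (hπ : Surjective π)
    (f : N →ₗ[R] M) : ∃ q : L →ₗ[R] M, q ∘ₗ j = f := by
  let Q := ProjectiveResolution.of (ModuleCat.of R F)
  let d := (Q.complex.d 1 0).hom
  let ε' : Q.complex.X 0 ⟶ ModuleCat.of R F := Q.π.f 0
  have : Epi ε' := inferInstanceAs (Epi (Q.π.f 0))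
  let ε := ε'.hom
  have hε : Surjective ε := (ModuleCat.epi_iff_surjective ε').1 inferInstance
  have hdε : Exact d ε := (ShortComplex.ShortExact.moduleCat_exact_iff_function_exact _).1 Q.exact₀
  have : Module.Projective R (Q.complex.X 0) := (IsProjective.iff_projective _).2 (Q.projective 0)
  obtain ⟨β, hβ⟩ := Module.projective_lifting_property π ε hπ
  have range_le (z : Q.complex.X 1) : (β ∘ₗ d) z ∈ LinearMap.range j := (hjπ _).1 <| by
    rw [LinearMap.comp_apply, ← LinearMap.comp_apply, hβ, hdε.apply_apply_eq_zero]
  let α : Q.complex.X 1 →ₗ[R] N :=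
    (LinearEquiv.ofInjective j hj).symm.toLinearMap ∘ₗ (β ∘ₗ d).codRestrict _ range_le
  have hα : j ∘ₗ α = β ∘ₗ d :=
    LinearMap.ext fun _ => LinearEquiv.ofInjective_symm_apply (h := hj) j _
  have α_comp_d : α ∘ₗ (Q.complex.d 2 1).hom = 0 := (LinearMap.cancel_left hj).1 <| by
    rw [← LinearMap.comp_assoc, hα, LinearMap.comp_assoc, ← ModuleCat.hom_comp,
      Q.complex.d_comp_d, ModuleCat.hom_zero, LinearMap.comp_zero, LinearMap.comp_zero]
  obtain ⟨g, hg⟩ := (extVanish_iff Q).1 h (ModuleCat.ofHom (f ∘ₗ α)) <| ModuleCat.hom_ext <| by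
    change (f ∘ₗ α) ∘ₗ (Q.complex.d 2 1).hom = 0
    rw [LinearMap.comp_assoc, α_comp_d, LinearMap.comp_zero]
  exact exists_comp_eq_of_exact_of_comp_eq hj hjπ hdε hε hβ hα
    (congrArg ModuleCat.Hom.hom hg).symm

theorem FPInjective.exists_comp_eq (hM : FPInjective R M) {P L : Type u} [AddCommGroup P]
    [Module R P] [AddCommGroup L] [Module R L] [Module.Finite R P] [Module.FinitePresentation R L]
    {j : P →ₗ[R] L} (hj : Injective j) (f : P →ₗ[R] M) : ∃ q : L →ₗ[R] M, q ∘ₗ j = f := by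
  have : Module.FinitePresentation R (L ⧸ LinearMap.range j) :=
    Module.finitePresentation_of_surjective _ (Submodule.mkQ_surjective _)
      (by rw [Submodule.ker_mkQ]; exact Submodule.fg_range j)
  exact (hM _ this).exists_comp_eq hj j.exact_map_mkQ_range (Submodule.mkQ_surjective _) f

theorem FPInjective.factorsThroughFree (hM : FPInjective R M) {P : Type u} [AddCommGroup P]
    [Module R P] [Module.Finite R P] (hP : EmbedsInFree R P) (f : P →ₗ[R] M) :
    FactorsThroughFree f := by
  obtain ⟨ι, j, hj⟩ := hP
  obtain ⟨T, hT⟩ := exists_finset_forall_mapDomain_comapDomain (Submodule.fg_range j)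
  let j' : P →ₗ[R] (T →₀ R) := Finsupp.lcomapDomain (↑) Subtype.val_injective ∘ₗ j
  have hj' : Injective j' := fun x y hxy => hj <| by
    rw [← hT (j x) ⟨x, rfl⟩, ← hT (j y) ⟨y, rfl⟩]
    exact congrArg (Finsupp.mapDomain _) hxy
  obtain ⟨q, hq⟩ := hM.exists_comp_eq hj' f
  exact ⟨T, j', q, hq⟩

open CategoryTheory in
theorem exists_injective_embedding (R : Type u) [Ring R] (M : Type u) [AddCommGroup M]
    [Module R M] :
    ∃ (J : Type u) (_ : AddCommGroup J) (_ : Module R J),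
      Module.Injective R J ∧ ∃ f : M →ₗ[R] J, Function.Injective f := by
  let J := Injective.under (ModuleCat.of R M)
  have : Injective (ModuleCat.of R J) := inferInstanceAs (Injective J)
  exact ⟨J, inferInstance, inferInstance, Module.injective_module_of_injective_object R J,
    (Injective.ι (ModuleCat.of R M)).hom, (ModuleCat.mono_iff_injective _).1 inferInstance⟩

end Ext

/-- Proposition 2.5: characterizations of left IF-rings. -/
theorem stmt_6 (R : Type u) [Ring R] :
    List.TFAE
      [LeftIF R,
       ∀ (M : Type u) [AddCommGroup M] [Module R M], Module.FinitePresentation R M →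
         ∃ (F : Type u) (_ : AddCommGroup F) (_ : Module R F),
           ModFlat R F ∧ ∃ f : M →ₗ[R] F, Injective f,
       ∀ (M : Type u) [AddCommGroup M] [Module R M], FPInjective R M → ModFlat R M,
       ∀ (M : Type u) [AddCommGroup M] [Module R M], Module.Injective R M → ModFlat R M] := by
  tfae_have 1 → 2 := fun h M _ _ hM => by
    obtain ⟨ι, f, hf⟩ := h M hM
    exact ⟨ι →₀ R, inferInstance, inferInstance, modFlat_finsupp R ι, f, hf⟩
  tfae_have 2 → 1 := fun h M _ _ hM => by
    obtain ⟨F, _, _, hF, f, hf⟩ := h M hM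
    exact (hF.factorsThroughFree f).embedsInFree hf
  tfae_have 1 → 3 := fun h M _ _ hM =>
    modFlat_of_forall_factorsThroughFree fun P _ _ hP f => hM.factorsThroughFree (h P hP) f
  tfae_have 3 → 4 := fun h M _ _ hM => h M (fpInjective_of_injective hM)
  tfae_have 4 → 2 := fun h M _ _ _ => by
    obtain ⟨J, _, _, hJ, f, hf⟩ := exists_injective_embedding R M
    exact ⟨J, inferInstance, inferInstance, h J hJ, f, hf⟩
  tfae_finish
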